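/- Let R be a regular commutative noetherian ring (every localization R_p has finite global dimension). Then any hereditary cotorsion pair of R-modules cogenerated by a class of pure-injective modules is cogenerated by a class of pure-injective modules of finite injective dimension. -/

import Mathlib

open CategoryTheory Opposite

noncomputable section

/-- Vanishing of the `n`-th Ext group of two `R`-modules. -/
def extV (R : Type) [Ring R] (M N : ModuleCat.{0} R) (n : ℕ) : Prop :=
  Subsingleton (((_root_.Ext ℤ (ModuleCat.{0} R) n).obj (op M)).obj N)

/-- The left `Ext^1`-orthogonal class. -/
def leftPerp1 (R : Type) [Ring R] (𝒳 : Set (ModuleCat.{0} R)) : Set (ModuleCat.{0} R) :=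
  {M | ∀ X ∈ 𝒳, extV R M X 1}

/-- The right `Ext^1`-orthogonal class. -/
def rightPerp1 (R : Type) [Ring R] (𝒳 : Set (ModuleCat.{0} R)) : Set (ModuleCat.{0} R) :=
  {N | ∀ X ∈ 𝒳, extV R X N 1}

/-- `(𝒞, 𝒲)` is a cotorsion pair. -/
def IsCotorsionPair (R : Type) [Ring R] (𝒞 𝒲 : Set (ModuleCat.{0} R)) : Prop :=
  𝒞 = leftPerp1 R 𝒲 ∧ 𝒲 = rightPerp1 R 𝒞

/-- `(𝒞, 𝒲)` is a hereditary cotorsion pair. -/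
def IsHereditaryCotorsionPair (R : Type) [Ring R] (𝒞 𝒲 : Set (ModuleCat.{0} R)) : Prop :=
  IsCotorsionPair R 𝒞 𝒲 ∧ ∀ X ∈ 𝒞, ∀ Y ∈ 𝒲, ∀ i : ℕ, 1 ≤ i → extV R X Y i

/-- The class `𝒞_(i) = {M ∣ Ext^j(M, W) = 0 for all j > i and all W ∈ 𝒲}`. -/
def cotShift (R : Type) [Ring R] (𝒲 : Set (ModuleCat.{0} R)) (i : ℕ) : Set (ModuleCat.{0} R) :=
  {M | ∀ Y ∈ 𝒲, ∀ j : ℕ, i < j → extV R M Y j}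

/-- `f : A →ₗ[R] B` is a pure monomorphism. -/
def IsPureMono (R : Type) [CommRing R] {A B : Type} [AddCommGroup A] [Module R A]
    [AddCommGroup B] [Module R B] (f : A →ₗ[R] B) : Prop :=
  Function.Injective f ∧
    ∀ (Q : Type) [AddCommGroup Q] [Module R Q], Function.Injective (LinearMap.lTensor Q f)

/-- An `R`-module `N` is pure-injective if it is injective with respect to
pure monomorphisms. -/
def PureInjective (R : Type) [CommRing R] (N : Type) [AddCommGroup N] [Module R N] : Prop :=
  ∀ (A B : Type) [AddCommGroup A] [Module R A] [AddCommGroup B] [Module R B]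
    (f : A →ₗ[R] B), IsPureMono R f → ∀ g : A →ₗ[R] N, ∃ h : B →ₗ[R] N, h.comp f = g

/-- `N` has injective dimension at most `n`: all Ext-groups above degree `n` vanish. -/
def injDimLE (R : Type) [Ring R] (N : ModuleCat.{0} R) (n : ℕ) : Prop :=
  ∀ M : ModuleCat.{0} R, ∀ j : ℕ, n < j → extV R M N j

/-- The class of pure-injective `R`-modules of finite injective dimension. -/
def PIFinInj (R : Type) [CommRing R] : Set (ModuleCat.{0} R) :=
  {N | PureInjective R ↥N ∧ ∃ n : ℕ, injDimLE R N n}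

/-- The depth of a module over a commutative noetherian local ring, as the infimum of
the degrees in which `Ext(k, M)` does not vanish (`⊤` if all vanish). -/
def rdepth (A : Type) [CommRing A] [IsLocalRing A] (M : Type) [AddCommGroup M]
    [Module A M] : ℕ∞ :=
  sInf {n : ℕ∞ | ∃ i : ℕ, n = (i : ℕ∞) ∧
    ¬ extV A (ModuleCat.of A (IsLocalRing.ResidueField A)) (ModuleCat.of A M) i}

/-- The residue field `k(p)` of `R_p`, as an `R`-module. -/
abbrev resField (R : Type) [CommRing R] (p : PrimeSpectrum R) : Type :=
  LocalizedModule p.asIdeal.primeCompl (R ⧸ p.asIdeal)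

/-- `depth(R_p)`. -/
def ringDepthAt (R : Type) [CommRing R] (p : PrimeSpectrum R) : ℕ∞ :=
  rdepth (Localization.AtPrime p.asIdeal) (Localization.AtPrime p.asIdeal)

/-- `depth_{R_p}(M_p)`. -/
def depthAt (R : Type) [CommRing R] (p : PrimeSpectrum R) (M : Type) [AddCommGroup M]
    [Module R M] : ℕ∞ :=
  rdepth (Localization.AtPrime p.asIdeal) (LocalizedModule p.asIdeal.primeCompl M)

/-- `f : M →ₗ[R] E` exhibits `E` as an injective envelope of `M`: `E` is injective and
`f` is an essential monomorphism. -/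
def IsInjectiveEnvelope (R : Type) [Ring R] {M E : Type} [AddCommGroup M] [Module R M]
    [AddCommGroup E] [Module R E] (f : M →ₗ[R] E) : Prop :=
  Module.Injective R E ∧ Function.Injective f ∧
    ∀ K : Submodule R E, K ≠ ⊥ → K ⊓ LinearMap.range f ≠ ⊥

/-!
Write `⊥P` for the class of modules `M` with `Ext¹(M, P) = 0`. The new cogenerators are the modules
`Hom_R(R_m, P)`, for `P` one of the given pure-injectives and `m` a maximal ideal. They are
pure-injective, and `Ext¹(M, Hom(R_m, P))` vanishes exactly when `Ext¹(M_m, P)` does. Hence they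
have finite injective dimension: the localization at `m` of a high syzygy of any `M` is projective
over `R_m`, so flat over `R`, and flat modules lie in `⊥P`. What remains is that `M` lies in
`𝒞 = ⋂ ⊥P` as soon as all its localizations `M_m` do.

This is noetherian induction on the closed set of primes at which `M` is not stably zero. Choose a
maximal ideal `m` in that set and a free cover `ψ : F → M`. For `t ∉ m`, the pullback `K_t` of
`t : M → M` along `ψ` is again locally in `𝒞`, and its stable support is contained in that of `M`
but avoids `m`, as multiplication by `t` on `K_t` factors through `F`. So `K_t ∈ 𝒞`. Every map from
a finitely presented module to the pullback `K` of `M → M_m` along `ψ_m` factors through some `K_t`;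
as `𝒞` is cogenerated by pure-injectives, `K ∈ 𝒞`. The exact sequence
`0 → K → M × F_m → M_m → 0` now exhibits `M` as a direct summand of a module in `𝒞`.
-/

section ExtVanishing

variable {R : Type} [Ring R]

theorem extV_succ_iff_of_projectiveResolution {M : ModuleCat.{0} R} (P : ProjectiveResolution M)
    (N : ModuleCat.{0} R) (n : ℕ) :
    extV R M N (n + 1) ↔
      ∀ φ : P.complex.X (n + 1) ⟶ N, P.complex.d (n + 2) (n + 1) ≫ φ = 0 →
        ∃ ψ : P.complex.X n ⟶ N, P.complex.d (n + 1) n ≫ ψ = φ := by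
  have homology_isZero : extV R M N (n + 1) ↔
      Limits.IsZero ((P.complex.linearYonedaObj ℤ N).homology (n + 1)) := by
    rw [← (P.isoExt (R := ℤ) (n + 1) N).isZero_iff, ModuleCat.isZero_iff_subsingleton]
    rfl
  rw [homology_isZero, ← HomologicalComplex.exactAt_iff_isZero_homology,
    HomologicalComplex.exactAt_iff' _ n (n + 1) (n + 2) (by simp) (by simp),
    ShortComplex.moduleCat_exact_iff]
  rfl

theorem ext_succ_eq_zero_iff_of_projectiveResolution {M : ModuleCat.{0} R}
    (P : ProjectiveResolution M) (N : ModuleCat.{0} R) (n : ℕ) :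
    (∀ α : Abelian.Ext.{0} M N (n + 1), α = 0) ↔
      ∀ φ : P.complex.X (n + 1) ⟶ N, P.complex.d (n + 2) (n + 1) ≫ φ = 0 →
        ∃ ψ : P.complex.X n ⟶ N, P.complex.d (n + 1) n ≫ ψ = φ := by
  constructor
  · intro h φ hφ
    exact (P.extMk_eq_zero_iff φ (n + 2) rfl hφ n rfl).1 (h _)
  · intro h α
    obtain ⟨φ, hφ, rfl⟩ := P.extMk_surjective α (n + 2) rfl
    exact (P.extMk_eq_zero_iff φ (n + 2) rfl hφ n rfl).2 (h φ hφ)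

theorem extV_succ_iff (M N : ModuleCat.{0} R) (n : ℕ) :
    extV R M N (n + 1) ↔ ∀ α : Abelian.Ext.{0} M N (n + 1), α = 0 := by
  obtain ⟨P⟩ := (inferInstance : HasProjectiveResolution M).out
  rw [extV_succ_iff_of_projectiveResolution P, ext_succ_eq_zero_iff_of_projectiveResolution P]

variable {A B C : Type} [AddCommGroup A] [Module R A] [AddCommGroup B] [Module R B]
  [AddCommGroup C] [Module R C]

/-- `0 → A → B → C → 0` is a short exact sequence, phrased for linear maps so that it can be used
without passing to `ShortComplex (ModuleCat R)`. -/
structure IsShortExact (f : A →ₗ[R] B) (g : B →ₗ[R] C) : Prop where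
  injective : Function.Injective f
  exact : Function.Exact f g
  surjective : Function.Surjective g

variable (R A) in
/-- The canonical map onto `A` from the free module on the elements of `A`, used for dimension
shifting. -/
abbrev freeCover : (A →₀ R) →ₗ[R] A := Finsupp.linearCombination R id

variable (R A) in
/-- The first syzygy of `A` in its standard free presentation. -/
abbrev syzygy : Submodule R (A →₀ R) := LinearMap.ker (freeCover R A)

namespace IsShortExact

theorem subtype_ker {g : B →ₗ[R] C} (hg : Function.Surjective g) :
    IsShortExact (LinearMap.ker g).subtype g :=
  ⟨Subtype.val_injective, LinearMap.exact_subtype_ker_map g, hg⟩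

variable (R B) in
theorem freeCover :
    IsShortExact (A := syzygy R B) (B := B →₀ R) (syzygy R B).subtype (freeCover R B) :=
  subtype_ker (Finsupp.linearCombination_id_surjective R B)

variable {f : A →ₗ[R] B} {g : B →ₗ[R] C}

theorem shortExact (h : IsShortExact f g) :
    (ModuleCat.shortComplexOfCompEqZero f g h.exact.linearMap_comp_eq_zero).ShortExact :=
  ModuleCat.shortComplex_shortExact _ h.exact h.injective h.surjective

theorem extV_left (h : IsShortExact f g) {N : ModuleCat.{0} R} {n : ℕ}
    (hB : extV R (.of R B) N (n + 1)) (hC : extV R (.of R C) N (n + 2)) :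
    extV R (.of R A) N (n + 1) := by
  rw [extV_succ_iff] at *
  intro α
  obtain ⟨β, rfl⟩ := Abelian.Ext.contravariant_sequence_exact₁ h.shortExact N α
    (n₁ := n + 2) (by omega) (hC _)
  rw [hB β, Abelian.Ext.comp_zero]

theorem extV_middle (h : IsShortExact f g) {N : ModuleCat.{0} R} {n : ℕ}
    (hA : extV R (.of R A) N (n + 1)) (hC : extV R (.of R C) N (n + 1)) :
    extV R (.of R B) N (n + 1) := by
  rw [extV_succ_iff] at *
  intro α
  obtain ⟨γ, rfl⟩ := Abelian.Ext.contravariant_sequence_exact₂ h.shortExact N α (hA _)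
  rw [hC γ, Abelian.Ext.comp_zero]

theorem extV_right (h : IsShortExact f g) {N : ModuleCat.{0} R} {n : ℕ}
    (hA : extV R (.of R A) N (n + 1)) (hB : extV R (.of R B) N (n + 2)) :
    extV R (.of R C) N (n + 2) := by
  rw [extV_succ_iff] at *
  intro α
  obtain ⟨β, rfl⟩ := Abelian.Ext.contravariant_sequence_exact₃ h.shortExact N α
    (n₀ := n + 1) (hB _) (by omega)
  rw [hA β, Abelian.Ext.comp_zero]

variable {N : Type} [AddCommGroup N] [Module R N]

theorem lcomp_surjective (h : IsShortExact f g) (hC : extV R (.of R C) (.of R N) 1) :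
    ∀ φ : A →ₗ[R] N, ∃ ψ : B →ₗ[R] N, ψ ∘ₗ f = φ := by
  intro φ
  obtain ⟨β, hβ⟩ := Abelian.Ext.contravariant_sequence_exact₁ h.shortExact (.of R N)
    (Abelian.Ext.mk₀ (ModuleCat.ofHom φ)) (n₁ := 1) rfl ((extV_succ_iff _ _ 0).1 hC _)
  obtain ⟨ψ, rfl⟩ := (Abelian.Ext.mk₀_bijective _ _).2 β
  rw [Abelian.Ext.mk₀_comp_mk₀] at hβ
  exact ⟨ψ.hom, congrArg ModuleCat.Hom.hom ((Abelian.Ext.mk₀_bijective _ _).1 hβ)⟩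

theorem extV_one_right (h : IsShortExact f g) (hB : extV R (.of R B) (.of R N) 1)
    (hext : ∀ φ : A →ₗ[R] N, ∃ ψ : B →ₗ[R] N, ψ ∘ₗ f = φ) :
    extV R (.of R C) (.of R N) 1 := by
  rw [extV_succ_iff] at *
  intro α
  obtain ⟨β, rfl⟩ := Abelian.Ext.contravariant_sequence_exact₃ h.shortExact (.of R N) α
    (n₀ := 0) (hB _) rfl
  obtain ⟨φ, rfl⟩ := (Abelian.Ext.mk₀_bijective _ _).2 β
  obtain ⟨ψ, hψ⟩ := hext φ.hom
  have hφ : φ = (ModuleCat.ofHom f) ≫ ModuleCat.ofHom ψ := ModuleCat.hom_ext hψ.symm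
  rw [hφ, ← Abelian.Ext.mk₀_comp_mk₀]
  exact h.shortExact.extClass_comp_assoc _

theorem extV_one_iff (h : IsShortExact f g) (hB : extV R (.of R B) (.of R N) 1) :
    extV R (.of R C) (.of R N) 1 ↔ ∀ φ : A →ₗ[R] N, ∃ ψ : B →ₗ[R] N, ψ ∘ₗ f = φ :=
  ⟨h.lcomp_surjective, h.extV_one_right hB⟩

end IsShortExact

theorem extV_succ_of_projective [Module.Projective R B] (N : ModuleCat.{0} R) (n : ℕ) :
    extV R (.of R B) N (n + 1) := by
  have : Projective (ModuleCat.of R B) := (IsProjective.iff_projective B).1 inferInstance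
  exact (extV_succ_iff _ _ n).2 Abelian.Ext.eq_zero_of_projective

theorem extV_succ_of_retract {N : ModuleCat.{0} R} {n : ℕ} (i : A →ₗ[R] B) (r : B →ₗ[R] A)
    (hri : r ∘ₗ i = .id) (hB : extV R (.of R B) N (n + 1)) : extV R (.of R A) N (n + 1) := by
  rw [extV_succ_iff] at *
  intro α
  have id_eq : 𝟙 (ModuleCat.of R A) = ModuleCat.ofHom i ≫ ModuleCat.ofHom r :=
    ModuleCat.hom_ext hri.symm
  rw [← Abelian.Ext.mk₀_id_comp α, id_eq, ← Abelian.Ext.mk₀_comp_mk₀_assoc, hB (.comp _ α _),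
    Abelian.Ext.comp_zero]

end ExtVanishing

section DirectSum

open DirectSum

variable {R : Type} [Ring R] {ι : Type} {A B C : ι → Type}
  [∀ i, AddCommGroup (A i)] [∀ i, Module R (A i)] [∀ i, AddCommGroup (B i)] [∀ i, Module R (B i)]
  [∀ i, AddCommGroup (C i)] [∀ i, Module R (C i)]

theorem IsShortExact.directSum_lmap {f : ∀ i, A i →ₗ[R] B i} {g : ∀ i, B i →ₗ[R] C i}
    (h : ∀ i, IsShortExact (f i) (g i)) : IsShortExact (lmap f) (lmap g) where
  injective := (lmap_injective f).2 fun i ↦ (h i).injective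
  exact := by
    rw [LinearMap.exact_iff, ker_lmap, range_lmap]
    simp only [(h _).exact.linearMap_ker_eq]
  surjective := (lmap_surjective g).2 fun i ↦ (h i).surjective

theorem extV_one_directSum {N : Type} [AddCommGroup N] [Module R N]
    (hC : ∀ i, extV R (.of R (C i)) (.of R N) 1) : extV R (.of R (⨁ i, C i)) (.of R N) 1 := by
  classical
  have cover := IsShortExact.directSum_lmap (A := fun i ↦ syzygy R (C i)) (B := fun i ↦ C i →₀ R)
    fun i ↦ IsShortExact.freeCover R (C i)
  refine cover.extV_one_right (extV_succ_of_projective _ 0) fun φ ↦ ?_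
  choose ψ hψ using fun i ↦ (IsShortExact.freeCover R (C i)).lcomp_surjective (hC i)
    (φ ∘ₗ lof R ι (fun i ↦ syzygy R (C i)) i)
  refine ⟨toModule R ι N ψ, linearMap_ext R fun i ↦ LinearMap.ext fun x ↦ ?_⟩
  simpa using LinearMap.congr_fun (hψ i) x

end DirectSum

section Purity

variable {R : Type} [CommRing R] {B L P : Type} [AddCommGroup B] [Module R B]
  [AddCommGroup L] [Module R L] [AddCommGroup P] [Module R P]

open TensorProduct in
theorem exists_sum_tmul_eq_of_span_eq_top {ι M N : Type} [Fintype ι] [AddCommGroup M] [Module R M]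
    [AddCommGroup N] [Module R N] {m : ι → M} (hm : Submodule.span R (Set.range m) = ⊤)
    (x : M ⊗[R] N) : ∃ n : ι → N, ∑ i, m i ⊗ₜ n i = x := by
  induction x with
  | zero => exact ⟨0, by simp⟩
  | tmul y z =>
    obtain ⟨c, rfl⟩ :=
      (Submodule.mem_span_range_iff_exists_fun R).1 (hm ▸ Submodule.mem_top : y ∈ _)
    exact ⟨fun i ↦ c i • z, by simp only [sum_tmul, smul_tmul]⟩
  | add x y hx hy =>
    obtain ⟨n, rfl⟩ := hx
    obtain ⟨n', rfl⟩ := hy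
    exact ⟨n + n', by simp only [Pi.add_apply, tmul_add, Finset.sum_add_distrib]⟩

/-- `g` is a pure epimorphism, in the sense that every linear map from a finitely presented module
to its target lifts along `g`. -/
def IsPureEpi (g : B →ₗ[R] L) : Prop :=
  ∀ (X : Type) [AddCommGroup X] [Module R X] [Module.FinitePresentation R X] (u : X →ₗ[R] L),
    ∃ v : X →ₗ[R] B, g ∘ₗ v = u

namespace IsPureEpi

variable {g : B →ₗ[R] L}

theorem surjective (hg : IsPureEpi g) : Function.Surjective g := by
  intro x
  obtain ⟨v, hv⟩ := hg R (LinearMap.toSpanSingleton R L x)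
  exact ⟨v 1, by simpa using LinearMap.congr_fun hv 1⟩

theorem vanishesTrivially_of_subtype_ker (hg : IsPureEpi g) {ι M : Type} [Fintype ι]
    [AddCommGroup M] [Module R M] {m : ι → M} {n : ι → LinearMap.ker g}
    (h : TensorProduct.VanishesTrivially R m fun i ↦ (n i : B)) :
    TensorProduct.VanishesTrivially R m n := by
  obtain ⟨k, a, y, hn, hm⟩ := h
  let relations : Submodule R (Fin k → R) := Submodule.span R (Set.range a)
  have : Module.FinitePresentation R ((Fin k → R) ⧸ relations) :=
    Module.finitePresentation_of_surjective relations.mkQ relations.mkQ_surjective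
      (by simpa only [Submodule.ker_mkQ] using Submodule.fg_span (Set.finite_range a))
  let sum_y : (Fin k → R) →ₗ[R] B := Fintype.linearCombination R y
  have sum_y_row (i : ι) : sum_y (a i) = n i := (hn i).symm
  have relations_le : relations ≤ LinearMap.ker (g ∘ₗ sum_y) := by
    rw [Submodule.span_le]
    rintro _ ⟨i, rfl⟩
    simp [sum_y_row]
  obtain ⟨v, hv⟩ := hg _ (relations.liftQ _ relations_le)
  let w : (Fin k → R) →ₗ[R] LinearMap.ker g :=
    (sum_y - v ∘ₗ relations.mkQ).codRestrict _ fun c ↦ by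
      simpa [sub_eq_zero] using (LinearMap.congr_fun hv (relations.mkQ c)).symm
  have w_row (i : ι) : w (a i) = n i := by
    have mkQ_row : relations.mkQ (a i) = 0 := by
      simpa using Submodule.subset_span (Set.mem_range_self i)
    exact Subtype.ext (by simp [w, -Submodule.mkQ_apply, mkQ_row, sum_y_row])
  exact ⟨k, a, fun j ↦ w fun l ↦ if j = l then 1 else 0,
    fun i ↦ (w_row i).symm.trans (w.pi_apply_eq_sum_univ (a i)), hm⟩

open TensorProduct in
theorem isPureMono_subtype_ker (hg : IsPureEpi g) : IsPureMono R (LinearMap.ker g).subtype := by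
  refine ⟨Subtype.val_injective, fun Q _ _ ↦ (injective_iff_map_eq_zero _).2 fun x hx ↦ ?_⟩
  obtain ⟨Q₁, hQ₁, x₁, rfl⟩ := exists_of_fg x
  rw [← LinearMap.comp_apply, LinearMap.lTensor_comp_rTensor, ← LinearMap.rTensor_comp_lTensor,
    LinearMap.comp_apply] at hx
  obtain ⟨Q₂, hQ₁₂, hQ₂, hx₂⟩ := eq_zero_of_fg_of_subtype_eq_zero hQ₁ hx
  rw [← LinearMap.comp_apply, LinearMap.rTensor_comp_lTensor, ← LinearMap.lTensor_comp_rTensor,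
    LinearMap.comp_apply] at hx₂
  have : Module.Finite R Q₂ := .of_fg hQ₂
  obtain ⟨l, m, hm⟩ := Module.Finite.exists_fin (R := R) (M := Q₂)
  obtain ⟨n, hn⟩ := exists_sum_tmul_eq_of_span_eq_top hm
    (LinearMap.rTensor _ (Submodule.inclusion hQ₁₂) x₁)
  have vanishes : VanishesTrivially R m n := hg.vanishesTrivially_of_subtype_ker <|
    vanishesTrivially_of_sum_tmul_eq_zero R hm (by simpa [← hn] using hx₂)
  have rTensor_eq_zero := hn.symm.trans (sum_tmul_eq_zero_of_vanishesTrivially R vanishes)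
  rw [← Submodule.subtype_comp_inclusion _ _ hQ₁₂, LinearMap.rTensor_comp, LinearMap.comp_apply,
    rTensor_eq_zero, map_zero]

theorem extV_one (hg : IsPureEpi g) (hP : PureInjective R P)
    (hB : extV R (.of R B) (.of R P) 1) : extV R (.of R L) (.of R P) 1 :=
  (IsShortExact.subtype_ker hg.surjective).extV_one_right hB (hP _ _ _ hg.isPureMono_subtype_ker)

end IsPureEpi

/-- For a filtered colimit `L` this is the closure of `⊥P` under filtered colimits, but no
compatibility between the maps `g i` is needed. -/
theorem extV_one_of_forall_exists_factorization (hP : PureInjective R P) {ι : Type} {N : ι → Type}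
    [∀ i, AddCommGroup (N i)] [∀ i, Module R (N i)] (g : ∀ i, N i →ₗ[R] L)
    (hN : ∀ i, extV R (.of R (N i)) (.of R P) 1)
    (hg : ∀ (X : Type) [AddCommGroup X] [Module R X] [Module.FinitePresentation R X]
      (u : X →ₗ[R] L), ∃ i, ∃ v : X →ₗ[R] N i, g i ∘ₗ v = u) :
    extV R (.of R L) (.of R P) 1 := by
  classical
  have pure : IsPureEpi (DirectSum.toModule R ι L g) := fun X _ _ _ u ↦ by
    obtain ⟨i, v, rfl⟩ := hg X u
    exact ⟨DirectSum.lof R ι N i ∘ₗ v, LinearMap.ext fun x ↦ by simp⟩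
  exact pure.extV_one hP (extV_one_directSum hN)

theorem extV_one_of_flat [Module.Flat R L] (hP : PureInjective R P) :
    extV R (.of R L) (.of R P) 1 :=
  extV_one_of_forall_exists_factorization hP (ι := Σ n : ℕ, (Fin n →₀ R) →ₗ[R] L) Sigma.snd
    (fun i ↦ extV_succ_of_projective _ 0) fun X _ _ _ u ↦ by
      obtain ⟨n, v, g, rfl⟩ := Module.Flat.exists_factorization_of_finitePresentation u
      exact ⟨⟨n, g⟩, v, rfl⟩

end Purity

section FlatBaseChange

open TensorProduct

variable {R : Type} [CommRing R]

namespace IsShortExact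

variable {X Y Z : Type} [AddCommGroup X] [Module R X] [AddCommGroup Y] [Module R Y]
  [AddCommGroup Z] [Module R Z] {f : X →ₗ[R] Y} {g : Y →ₗ[R] Z}

theorem lTensor (A : Type) [AddCommGroup A] [Module R A] [Module.Flat R A]
    (h : IsShortExact f g) : IsShortExact (f.lTensor A) (g.lTensor A) :=
  ⟨Module.Flat.lTensor_preserves_injective_linearMap f h.injective,
    Module.Flat.lTensor_exact A h.exact, LinearMap.lTensor_surjective A h.surjective⟩

theorem baseChange (A : Type) [CommRing A] [Algebra R A] [Module.Flat R A]
    (h : IsShortExact f g) : IsShortExact (f.baseChange A) (g.baseChange A) :=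
  let h' := h.lTensor A
  ⟨h'.injective, h'.exact, h'.surjective⟩

end IsShortExact

variable {P : Type} [AddCommGroup P] [Module R P]

section Localization

variable {C L : Type} [AddCommGroup C] [Module R C] [AddCommGroup L] [Module R L]
  {S : Submonoid R} {f : C →ₗ[R] L} [IsLocalizedModule S f]

variable (f) in
/-- The map `x ↦ f x / s` into a localized module, for a fixed denominator `s`. -/
def fractionMap (s : S) : C →ₗ[R] L :=
  (↑(IsLocalizedModule.map_units f s).unit⁻¹ : Module.End R L) ∘ₗ f

theorem fractionMap_apply_eq_iff {s : S} {x : C} {y : L} :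
    fractionMap f s x = y ↔ f x = (s : R) • y :=
  Module.End.algebraMap_isUnit_inv_apply_eq_iff R (IsLocalizedModule.map_units f s) _ _

theorem extV_one_of_isLocalizedModule (S : Submonoid R) (f : C →ₗ[R] L) [IsLocalizedModule S f]
    (hP : PureInjective R P) (hC : extV R (.of R C) (.of R P) 1) : extV R (.of R L) (.of R P) 1 :=
  extV_one_of_forall_exists_factorization hP (fractionMap f) (fun _ ↦ hC) fun X _ _ _ u ↦ by
    obtain ⟨v, s, hv⟩ := Module.FinitePresentation.exists_lift_of_isLocalizedModule S f u
    exact ⟨s, v, LinearMap.ext fun x ↦ fractionMap_apply_eq_iff.2 (LinearMap.congr_fun hv x)⟩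

end Localization

section HomTensor

variable {A : Type} [AddCommGroup A] [Module R A]

theorem forall_exists_comp_eq_hom_iff_lTensor {X Y : Type} [AddCommMonoid X] [Module R X]
    [AddCommMonoid Y] [Module R Y] (f : X →ₗ[R] Y) :
    (∀ φ : X →ₗ[R] A →ₗ[R] P, ∃ ψ : Y →ₗ[R] A →ₗ[R] P, ψ ∘ₗ f = φ) ↔
      ∀ φ : A ⊗[R] X →ₗ[R] P, ∃ ψ : A ⊗[R] Y →ₗ[R] P, ψ ∘ₗ f.lTensor A = φ := by
  constructor
  · intro h φ
    obtain ⟨ψ, hψ⟩ := h (curry φ).flip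
    exact ⟨lift ψ.flip, ext' fun a x ↦ LinearMap.congr_fun₂ hψ x a⟩
  · intro h φ
    obtain ⟨ψ, hψ⟩ := h (lift φ.flip)
    exact ⟨(curry ψ).flip, LinearMap.ext₂ fun x a ↦ LinearMap.congr_fun hψ (a ⊗ₜ x)⟩

theorem IsPureMono.lTensor {X Y : Type} [AddCommGroup X] [Module R X] [AddCommGroup Y]
    [Module R Y] {f : X →ₗ[R] Y} (hf : IsPureMono R f) : IsPureMono R (f.lTensor A) := by
  refine ⟨hf.2 A, fun Q _ _ ↦ ?_⟩
  have h := hf.2 (Q ⊗[R] A)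
  rw [LinearMap.lTensor_tensor] at h
  simpa using h

theorem PureInjective.hom (hP : PureInjective R P) : PureInjective R (A →ₗ[R] P) :=
  fun _ _ _ _ _ _ f hf ↦ (forall_exists_comp_eq_hom_iff_lTensor f).2 (hP _ _ _ hf.lTensor)

theorem extV_one_hom_iff [Module.Flat R A] (hP : PureInjective R P) (M : Type) [AddCommGroup M]
    [Module R M] :
    extV R (.of R M) (.of R (A →ₗ[R] P)) 1 ↔ extV R (.of R (A ⊗[R] M)) (.of R P) 1 := by
  have cover := IsShortExact.freeCover R M
  have hom_tensor := forall_exists_comp_eq_hom_iff_lTensor (A := A) (P := P) (syzygy R M).subtype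
  exact (cover.extV_one_iff (extV_succ_of_projective _ 0)).trans <|
    hom_tensor.trans ((cover.lTensor A).extV_one_iff (extV_one_of_flat hP)).symm

end HomTensor

theorem projective_of_forall_extV_one {A M : Type} [Ring A] [AddCommGroup M] [Module A M]
    (h : ∀ N : ModuleCat.{0} A, extV A (.of A M) N 1) : Module.Projective A M := by
  rw [IsProjective.iff_projective, projective_iff_subsingleton_ext_one]
  exact fun N ↦ subsingleton_of_forall_eq 0 ((extV_succ_iff _ _ 0).1 (h N))

variable {A : Type} [CommRing A] [Algebra R A] [Module.Flat R A]

theorem extV_hom_of_forall_extV_tensorProduct (hP : PureInjective R P) (n : ℕ) (M : Type)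
    [AddCommGroup M] [Module R M]
    (h : ∀ N : ModuleCat.{0} A, extV A (.of A (A ⊗[R] M)) N (n + 1)) :
    extV R (.of R M) (.of R (A →ₗ[R] P)) (n + 1) := by
  induction n generalizing M with
  | zero =>
    have : Module.Projective A (A ⊗[R] M) := projective_of_forall_extV_one h
    have : Module.Flat R (A ⊗[R] M) := Module.Flat.trans R A _
    exact (extV_one_hom_iff hP M).2 (extV_one_of_flat hP)
  | succ n ih =>
    have cover := IsShortExact.freeCover R M
    exact cover.extV_right
      (ih _ fun N ↦ (cover.baseChange A).extV_left (extV_succ_of_projective _ n) (h N))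
      (extV_succ_of_projective _ (n + 1))

theorem injDimLE_hom (hP : PureInjective R P) {n : ℕ}
    (hA : ∀ (M N : ModuleCat.{0} A) (j : ℕ), n < j → extV A M N j) :
    injDimLE R (.of R (A →ₗ[R] P)) n := by
  rintro M (_ | j) hj
  · exact absurd hj (Nat.not_lt_zero n)
  · exact extV_hom_of_forall_extV_tensorProduct hP j M fun N ↦ hA _ N _ hj

end FlatBaseChange

section StableAnnihilator

variable {R : Type} [CommRing R] {A B C F L M N X : Type} [AddCommGroup A] [Module R A]
  [AddCommGroup B] [Module R B] [AddCommGroup C] [Module R C] [AddCommGroup F] [Module R F]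
  [AddCommGroup L] [Module R L] [AddCommGroup M] [Module R M] [AddCommGroup N] [Module R N]
  [AddCommGroup X] [Module R X]

variable (R M) in
/-- The stable annihilator of `M`: the scalars `a` for which multiplication by `a` on `M` factors
through a projective module. It is encoded with factorizations through the free module on the
elements of `M`, which suffice by `mem_stableAnnihilator_of_comp_eq`. -/
def stableAnnihilator : Ideal R :=
  (LinearMap.range (LinearMap.compRight R (freeCover R M) :
    (M →ₗ[R] M →₀ R) →ₗ[R] M →ₗ[R] M)).comap (LinearMap.toSpanSingleton R _ .id)

theorem mem_stableAnnihilator_iff {a : R} :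
    a ∈ stableAnnihilator R M ↔ ∃ s : M →ₗ[R] M →₀ R, freeCover R M ∘ₗ s = a • .id :=
  Iff.rfl

theorem mem_stableAnnihilator_of_comp_eq [Module.Projective R F] {a : R} (i : M →ₗ[R] F)
    (r : F →ₗ[R] M) (h : r ∘ₗ i = a • .id) : a ∈ stableAnnihilator R M := by
  obtain ⟨r', rfl⟩ := Module.projective_lifting_property (freeCover R M) r
    (IsShortExact.freeCover R M).surjective
  exact mem_stableAnnihilator_iff.2 ⟨r' ∘ₗ i, h⟩

theorem projective_of_stableAnnihilator_eq_top (h : stableAnnihilator R M = ⊤) :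
    Module.Projective R M := by
  obtain ⟨s, hs⟩ := mem_stableAnnihilator_iff.1 ((Ideal.eq_top_iff_one _).1 h)
  exact Module.projective_def'.2 ⟨s, by rw [hs, one_smul]⟩

namespace IsShortExact

variable {f : A →ₗ[R] B} {g : B →ₗ[R] C}

theorem exists_comp_eq (h : IsShortExact f g) {φ : X →ₗ[R] B} (hφ : g ∘ₗ φ = 0) :
    ∃ ψ : X →ₗ[R] A, f ∘ₗ ψ = φ := by
  have mem_range (x : X) : φ x ∈ LinearMap.range f := (h.exact _).1 (LinearMap.congr_fun hφ x)
  refine ⟨(LinearEquiv.ofInjective f h.injective).symm ∘ₗ φ.codRestrict _ mem_range,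
    LinearMap.ext fun x ↦ ?_⟩
  exact congrArg Subtype.val
    ((LinearEquiv.ofInjective f h.injective).apply_symm_apply ⟨φ x, mem_range x⟩)

theorem exists_comp_add_comp_eq_smul_id (h : IsShortExact f g) {c : R}
    (hc : c ∈ stableAnnihilator R C) :
    ∃ (r : B →ₗ[R] A) (l : (C →₀ R) →ₗ[R] B) (s : C →ₗ[R] C →₀ R),
      f ∘ₗ r + l ∘ₗ s ∘ₗ g = c • .id := by
  obtain ⟨s, hs⟩ := mem_stableAnnihilator_iff.1 hc
  obtain ⟨l, hl⟩ := Module.projective_lifting_property g (_root_.freeCover R C) h.surjective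
  have g_comp : g ∘ₗ (c • .id - l ∘ₗ s ∘ₗ g) = 0 := by
    rw [LinearMap.comp_sub, ← LinearMap.comp_assoc, hl, ← LinearMap.comp_assoc, hs]
    exact LinearMap.ext fun x ↦ by simp
  obtain ⟨r, hr⟩ := h.exists_comp_eq g_comp
  exact ⟨r, l, s, by rw [hr, sub_add_cancel]⟩

theorem stableAnnihilator_le_of_projective [Module.Projective R B] (h : IsShortExact f g) :
    stableAnnihilator R C ≤ stableAnnihilator R A := by
  intro c hc
  obtain ⟨r, l, s, hrls⟩ := h.exists_comp_add_comp_eq_smul_id hc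
  refine mem_stableAnnihilator_of_comp_eq f r (LinearMap.ext fun x ↦ h.injective ?_)
  simpa [h.exact.apply_apply_eq_zero] using LinearMap.congr_fun hrls (f x)

theorem stableAnnihilator_mul_le (h : IsShortExact f g) :
    stableAnnihilator R A * stableAnnihilator R C ≤ stableAnnihilator R B := by
  refine Ideal.mul_le.2 fun a ha c hc ↦ ?_
  obtain ⟨t, ht⟩ := mem_stableAnnihilator_iff.1 ha
  obtain ⟨r, l, s, hrls⟩ := h.exists_comp_add_comp_eq_smul_id hc
  refine mem_stableAnnihilator_of_comp_eq ((t ∘ₗ r).prod (s ∘ₗ g))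
    ((f ∘ₗ _root_.freeCover R A).coprod (a • l)) (LinearMap.ext fun x ↦ ?_)
  have t_apply (y : A) : _root_.freeCover R A (t y) = a • y := LinearMap.congr_fun ht y
  have hx : f (r x) + l (s (g x)) = c • x := LinearMap.congr_fun hrls x
  calc f (_root_.freeCover R A (t (r x))) + a • l (s (g x))
      = a • c • x := by rw [t_apply, map_smul, ← smul_add, hx]
    _ = (a * c) • x := smul_smul a c x

end IsShortExact

/-- The pullback of `f : M → L` and `g : N → L`, as a submodule of `M × N`. -/
def fiberProduct (f : M →ₗ[R] L) (g : N →ₗ[R] L) : Submodule R (M × N) :=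
  LinearMap.eqLocus (f ∘ₗ .fst R M N) (g ∘ₗ .snd R M N)

section FiberProduct

variable {f : M →ₗ[R] L} {g : N →ₗ[R] L}

theorem mem_fiberProduct {x : M × N} : x ∈ fiberProduct f g ↔ f x.1 = g x.2 :=
  Iff.rfl

theorem isShortExact_fiberProduct_subtype (f : M →ₗ[R] L) (hg : Function.Surjective g) :
    IsShortExact (A := fiberProduct f g) (B := M × N) (fiberProduct f g).subtype
      (f.coprod (-g)) where
  injective := Subtype.val_injective
  exact x := by simp [mem_fiberProduct, ← sub_eq_add_neg, sub_eq_zero]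
  surjective z := by
    obtain ⟨y, rfl⟩ := hg z
    exact ⟨(0, -y), by simp⟩

theorem isShortExact_fiberProduct_fst (f : M →ₗ[R] L) (hg : Function.Surjective g) :
    IsShortExact (A := LinearMap.ker g) (B := fiberProduct f g)
      ((LinearMap.inr R M N ∘ₗ (LinearMap.ker g).subtype).codRestrict _
        fun y ↦ by simp [mem_fiberProduct])
      (LinearMap.fst R M N ∘ₗ (fiberProduct f g).subtype) where
  injective y y' h := Subtype.ext (congrArg (Prod.snd ∘ Subtype.val) h)
  exact := by
    rintro ⟨⟨x, y⟩, hxy⟩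
    constructor
    · rintro rfl
      exact ⟨⟨y, by simpa using (mem_fiberProduct.1 hxy).symm⟩, rfl⟩
    · rintro ⟨y', h⟩
      exact (congrArg (Prod.fst ∘ Subtype.val) h).symm
  surjective x := by
    obtain ⟨y, hy⟩ := hg (f x)
    exact ⟨⟨(x, y), hy.symm⟩, rfl⟩

theorem stableAnnihilator_mul_le_fiberProduct [Module.Projective R N] (f : M →ₗ[R] L)
    (hg : Function.Surjective g) :
    stableAnnihilator R L * stableAnnihilator R M ≤ stableAnnihilator R (fiberProduct f g) :=
  (Ideal.mul_mono_left (IsShortExact.subtype_ker hg).stableAnnihilator_le_of_projective).trans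
    (isShortExact_fiberProduct_fst f hg).stableAnnihilator_mul_le

theorem mem_stableAnnihilator_fiberProduct_lsmul [Module.Projective R N] (t : R) :
    t ∈ stableAnnihilator R (fiberProduct (.lsmul R L t) g) := by
  refine mem_stableAnnihilator_of_comp_eq
    (LinearMap.snd R L N ∘ₗ (fiberProduct (.lsmul R L t) g).subtype)
    ((g.prod (t • .id)).codRestrict _ fun y ↦ by simp [mem_fiberProduct])
    (LinearMap.ext fun x ↦ Subtype.ext (Prod.ext (mem_fiberProduct.1 x.2).symm rfl))

end FiberProduct

end StableAnnihilator

section FiberProductLocalization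

variable {R : Type} [CommRing R] {F F' M M' P : Type} [AddCommGroup F] [Module R F]
  [AddCommGroup F'] [Module R F'] [AddCommGroup M] [Module R M] [AddCommGroup M'] [Module R M']
  [AddCommGroup P] [Module R P] {S : Submonoid R} {f : M →ₗ[R] M'} [IsLocalizedModule S f]
  {h : F →ₗ[R] F'} [IsLocalizedModule S h] {g : F →ₗ[R] M} {g' : F' →ₗ[R] M'}

/-- The map `(x, y) ↦ (x, y / s)` from the pullback of multiplication by `s` on `M` along `g` to
the pullback of the localization `M → M'` along the localization `g'` of `g`. -/
def fiberProductFractionMap (hg : g' ∘ₗ h = f ∘ₗ g) (s : S) :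
    fiberProduct (.lsmul R M s) g →ₗ[R] fiberProduct f g' :=
  (LinearMap.id.prodMap (fractionMap h s) ∘ₗ (fiberProduct _ g).subtype).codRestrict _ <| by
    rintro ⟨⟨x, y⟩, hxy⟩
    have smul_eq : (s : R) • x = g y := hxy
    have h_eq : h y = (s : R) • fractionMap h s y := fractionMap_apply_eq_iff.1 rfl
    refine mem_fiberProduct.2 (IsLocalizedModule.smul_injective f s ?_)
    calc (s : R) • f x
        = f (g y) := by rw [← map_smul, smul_eq]
      _ = g' (h y) := (LinearMap.congr_fun hg y).symm
      _ = (s : R) • g' (fractionMap h s y) := by rw [h_eq, map_smul]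

theorem exists_lift_fiberProductFractionMap (hg : g' ∘ₗ h = f ∘ₗ g) {X : Type} [AddCommGroup X]
    [Module R X] [Module.FinitePresentation R X] (u : X →ₗ[R] fiberProduct f g') :
    ∃ (s : S) (v : X →ₗ[R] fiberProduct (.lsmul R M s) g),
      fiberProductFractionMap hg s ∘ₗ v = u := by
  let u₁ : X →ₗ[R] M := .fst R M F' ∘ₗ (fiberProduct f g').subtype ∘ₗ u
  let u₂ : X →ₗ[R] F' := .snd R M F' ∘ₗ (fiberProduct f g').subtype ∘ₗ u
  have u_mem (x : X) : f (u₁ x) = g' (u₂ x) := (u x).2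
  obtain ⟨v, s, hv⟩ := Module.FinitePresentation.exists_lift_of_isLocalizedModule S h u₂
  have h_v (x : X) : h (v x) = (s : R) • u₂ x := LinearMap.congr_fun hv x
  have localized_eq : f ∘ₗ g ∘ₗ v = f ∘ₗ ((s : R) • u₁) := LinearMap.ext fun x ↦ by
    calc f (g (v x)) = g' (h (v x)) := (LinearMap.congr_fun hg (v x)).symm
      _ = (s : R) • g' (u₂ x) := by rw [h_v, map_smul]
      _ = f ((s : R) • u₁ x) := by rw [← u_mem, map_smul]
  obtain ⟨t, ht⟩ := Module.Finite.exists_smul_of_comp_eq_of_isLocalizedModule S f _ _ localized_eq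
  have t_smul (x : X) : (t : R) • g (v x) = (t : R) • (s : R) • u₁ x := LinearMap.congr_fun ht x
  refine ⟨t * s, (u₁.prod ((t : R) • v)).codRestrict _ fun x ↦ ?_, LinearMap.ext fun x ↦ ?_⟩
  · calc ((t * s : S) : R) • u₁ x = (t : R) • g (v x) := by rw [t_smul, smul_smul, S.coe_mul]
      _ = g ((t : R) • v x) := (map_smul g _ _).symm
  · refine Subtype.ext (Prod.ext rfl (fractionMap_apply_eq_iff.2 ?_))
    calc h ((t : R) • v x) = ((t * s : S) : R) • u₂ x := by
          rw [map_smul, h_v, smul_smul, S.coe_mul]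

theorem extV_one_fiberProduct_of_isLocalizedModule (hP : PureInjective R P)
    (hg : g' ∘ₗ h = f ∘ₗ g)
    (hK : ∀ s : S, extV R (.of R (fiberProduct (.lsmul R M s) g)) (.of R P) 1) :
    extV R (.of R (fiberProduct f g')) (.of R P) 1 :=
  extV_one_of_forall_exists_factorization hP (fiberProductFractionMap hg) hK
    fun _ _ _ _ u ↦ exists_lift_fiberProductFractionMap hg u

end FiberProductLocalization

section StableSupport

variable {R : Type} [CommRing R] {L N : Type} [AddCommGroup L] [Module R L] [AddCommGroup N]
  [Module R N]

variable (R L) in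
/-- The stable support of `L`: the closed set of primes containing the stable annihilator. The
local-global principle is proved by noetherian induction on it. -/
def stableSupport : TopologicalSpace.Closeds (PrimeSpectrum R) :=
  ⟨PrimeSpectrum.zeroLocus (stableAnnihilator R L), PrimeSpectrum.isClosed_zeroLocus _⟩

theorem mem_stableSupport {p : PrimeSpectrum R} :
    p ∈ stableSupport R L ↔ stableAnnihilator R L ≤ p.asIdeal :=
  Iff.rfl

theorem stableSupport_fiberProduct_lt [Module.Projective R N] {g : N →ₗ[R] L}
    (hg : Function.Surjective g) {p : PrimeSpectrum R} (hp : p ∈ stableSupport R L) {t : R}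
    (ht : t ∉ p.asIdeal) :
    stableSupport R (fiberProduct (.lsmul R L t) g) < stableSupport R L := by
  refine SetLike.lt_iff_le_and_exists.2 ⟨fun q hq ↦ ?_, p, hp, fun hp' ↦
    ht (mem_stableSupport.1 hp' (mem_stableAnnihilator_fiberProduct_lsmul t))⟩
  have mul_le := (stableAnnihilator_mul_le_fiberProduct (.lsmul R L t) hg).trans
    (mem_stableSupport.1 hq)
  exact mem_stableSupport.2 ((q.isPrime.mul_le.1 mul_le).elim id id)

end StableSupport

section LocalGlobal

open TensorProduct

variable {R : Type} [CommRing R] {𝒞 𝒲 𝒬 : Set (ModuleCat.{0} R)}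

variable (𝒞) in
/-- `𝒞` contains the kernels of epimorphisms between its members. -/
def IsClosedUnderEpiKernels : Prop :=
  ∀ ⦃X Y Z : Type⦄ [AddCommGroup X] [Module R X] [AddCommGroup Y] [Module R Y] [AddCommGroup Z]
    [Module R Z] ⦃f : X →ₗ[R] Y⦄ ⦃g : Y →ₗ[R] Z⦄,
    IsShortExact f g → ModuleCat.of R Y ∈ 𝒞 → ModuleCat.of R Z ∈ 𝒞 → ModuleCat.of R X ∈ 𝒞

theorem IsHereditaryCotorsionPair.isClosedUnderEpiKernels (h : IsHereditaryCotorsionPair R 𝒞 𝒲) :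
    IsClosedUnderEpiKernels 𝒞 := by
  intro X Y Z _ _ _ _ _ _ f g hfg hY hZ
  rw [h.1.1]
  exact fun W hW ↦ hfg.extV_left (h.2 _ hY W hW 1 le_rfl) (h.2 _ hZ W hW 2 one_le_two)

variable (𝒞) in
/-- The localizations of `M` at all maximal ideals, regarded as `R`-modules, belong to `𝒞`. -/
def LocallyMem (M : Type) [AddCommGroup M] [Module R M] : Prop :=
  ∀ (m : Ideal R) [m.IsMaximal], ModuleCat.of R (Localization.AtPrime m ⊗[R] M) ∈ 𝒞

variable {F M : Type} [AddCommGroup F] [Module R F] [AddCommGroup M] [Module R M]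

theorem LocallyMem.fiberProduct [Module.Flat R F] (hPI : ∀ P ∈ 𝒬, PureInjective R P)
    (hker : IsClosedUnderEpiKernels (leftPerp1 R 𝒬)) (hM : LocallyMem (leftPerp1 R 𝒬) M)
    (f : M →ₗ[R] M) {g : F →ₗ[R] M} (hg : Function.Surjective g) :
    LocallyMem (leftPerp1 R 𝒬) (_root_.fiberProduct f g) := by
  intro m _
  have : Module.Flat R (Localization.AtPrime m) := IsLocalization.flat _ m.primeCompl
  have cover_mem : ModuleCat.of R (Localization.AtPrime m ⊗[R] F) ∈ leftPerp1 R 𝒬 :=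
    fun P hP ↦ extV_one_of_flat (hPI P hP)
  have ker_mem := hker ((IsShortExact.subtype_ker hg).lTensor (Localization.AtPrime m))
    cover_mem (hM m)
  exact fun P hP ↦ ((isShortExact_fiberProduct_fst f hg).lTensor _).extV_middle
    (ker_mem P hP) (hM m P hP)

theorem extV_one_of_fiberProduct_lsmul {P : Type} [AddCommGroup P] [Module R P]
    (hP : PureInjective R P) {g : F →ₗ[R] M} (hg : Function.Surjective g) (m : Ideal R) [m.IsPrime]
    (hM : extV R (.of R (Localization.AtPrime m ⊗[R] M)) (.of R P) 1)
    (hK : ∀ t ∉ m, extV R (.of R (fiberProduct (.lsmul R M t) g)) (.of R P) 1) :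
    extV R (.of R M) (.of R P) 1 := by
  let A := Localization.AtPrime m
  have comm : g.lTensor A ∘ₗ TensorProduct.mk R A F 1 = TensorProduct.mk R A M 1 ∘ₗ g := rfl
  have ext_fiberProduct := extV_one_fiberProduct_of_isLocalizedModule (S := m.primeCompl) hP comm
    fun s ↦ hK s s.2
  have ext_prod := (isShortExact_fiberProduct_subtype (TensorProduct.mk R A M 1)
    (LinearMap.lTensor_surjective A hg)).extV_middle ext_fiberProduct hM
  exact extV_succ_of_retract (LinearMap.inl R M _) (LinearMap.fst R M _)
    (LinearMap.fst_comp_inl _ _ _) ext_prod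

theorem mem_leftPerp1_of_locallyMem [TopologicalSpace.NoetherianSpace (PrimeSpectrum R)]
    (hPI : ∀ P ∈ 𝒬, PureInjective R P) (hker : IsClosedUnderEpiKernels (leftPerp1 R 𝒬))
    (hM : LocallyMem (leftPerp1 R 𝒬) M) : ModuleCat.of R M ∈ leftPerp1 R 𝒬 := by
  induction hZ : stableSupport R M using WellFoundedLT.induction generalizing M with
  | ind Z ih =>
    subst hZ
    by_cases htop : stableAnnihilator R M = ⊤
    · have := projective_of_stableAnnihilator_eq_top htop
      exact fun P _ ↦ extV_succ_of_projective P 0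
    obtain ⟨m, hm, hle⟩ := Ideal.exists_le_maximal _ htop
    have cover_surjective := (IsShortExact.freeCover R M).surjective
    have fiberProduct_mem (t : R) (ht : t ∉ m) :
        ModuleCat.of R (fiberProduct (.lsmul R M t) (freeCover R M)) ∈ leftPerp1 R 𝒬 :=
      ih _ (stableSupport_fiberProduct_lt cover_surjective (p := ⟨m, hm.isPrime⟩) hle ht)
        (hM.fiberProduct hPI hker _ cover_surjective) rfl
    exact fun P hP ↦ extV_one_of_fiberProduct_lsmul (hPI P hP) cover_surjective m (hM m P hP)
      fun t ht ↦ fiberProduct_mem t ht P hP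

end LocalGlobal

theorem stmt18_general (R : Type) [CommRing R] [TopologicalSpace.NoetherianSpace (PrimeSpectrum R)]
    (hreg : ∀ (m : Ideal R) [m.IsMaximal], ∃ n : ℕ,
      ∀ (M N : ModuleCat.{0} (Localization.AtPrime m)) (j : ℕ), n < j →
        extV (Localization.AtPrime m) M N j)
    (𝒞 𝒲 Pcl : Set (ModuleCat.{0} R))
    (hpair : IsHereditaryCotorsionPair R 𝒞 𝒲)
    (hPI : ∀ P ∈ Pcl, PureInjective R ↥P)
    (hcogen : 𝒞 = leftPerp1 R Pcl) :
    ∃ Pcl' : Set (ModuleCat.{0} R), Pcl' ⊆ PIFinInj R ∧ 𝒞 = leftPerp1 R Pcl' := by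
  subst hcogen
  have flat (m : Ideal R) [m.IsMaximal] : Module.Flat R (Localization.AtPrime m) :=
    IsLocalization.flat _ m.primeCompl
  refine ⟨{N | ∃ (m : Ideal R) (_ : m.IsMaximal), ∃ P ∈ Pcl,
    N = .of R (Localization.AtPrime m →ₗ[R] P)}, ?_, Set.ext fun M ↦ ⟨?_, fun hM ↦ ?_⟩⟩
  · rintro _ ⟨m, _, P, hP, rfl⟩
    obtain ⟨n, hn⟩ := hreg m
    exact ⟨(hPI P hP).hom, n, injDimLE_hom (hPI P hP) hn⟩
  · rintro hM _ ⟨m, _, P, hP, rfl⟩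
    exact (extV_one_hom_iff (hPI P hP) M).2 <| extV_one_of_isLocalizedModule m.primeCompl
      (TensorProduct.mk R (Localization.AtPrime m) M 1) (hPI P hP) (hM P hP)
  · exact mem_leftPerp1_of_locallyMem hPI hpair.isClosedUnderEpiKernels fun m hm P hP ↦
      (extV_one_hom_iff (hPI P hP) M).1 (hM _ ⟨m, hm, P, hP, rfl⟩)

/-- over a regular commutative noetherian ring (all localizations at primes
have finite global dimension), every hereditary cotorsion pair cogenerated by a class of
pure-injective modules is cogenerated by a class of pure-injective modules of finite
injective dimension. -/
theorem stmt18 (R : Type) [CommRing R] [IsNoetherianRing R]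
    (hreg : ∀ p : PrimeSpectrum R, ∃ n : ℕ,
      ∀ (M N : ModuleCat.{0} (Localization.AtPrime p.asIdeal)) (j : ℕ), n < j →
        extV (Localization.AtPrime p.asIdeal) M N j)
    (𝒞 𝒲 Pcl : Set (ModuleCat.{0} R))
    (hpair : IsHereditaryCotorsionPair R 𝒞 𝒲)
    (hPI : ∀ P ∈ Pcl, PureInjective R ↥P)
    (hcogen : 𝒞 = leftPerp1 R Pcl) :
    ∃ Pcl' : Set (ModuleCat.{0} R), Pcl' ⊆ PIFinInj R ∧ 𝒞 = leftPerp1 R Pcl' :=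
  stmt18_general R (fun m _ ↦ hreg ⟨m, inferInstance⟩) 𝒞 𝒲 Pcl hpair hPI hcogen
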